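/- Assume Condition (A) holds. Let γ : (a, b) → Ω be a differentiable curve with γ'(t) = V(γ(t)) for all t ∈ (a, b), and suppose γ(t₀) = x* for some t₀ ∈ (a, b) and some x* ∈ Γ with V(x*) ≠ 0. Then there exists ε > 0 such that f(γ(t)) = 0 for all t with |t − t₀| < ε; that is, near x* the integral curve γ lies entirely in the hypersurface Γ. -/

import Mathlib

open Filter Topology

/-- Partial derivative of `g : ℝⁿ → ℝ` in the `i`-th coordinate direction. -/
noncomputable def pderiv' {n : ℕ} (g : (Fin n → ℝ) → ℝ) (i : Fin n) (x : Fin n → ℝ) : ℝ :=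
  fderiv ℝ g x (Pi.single i 1)

/-- Divergence of a vector field on ℝⁿ. -/
noncomputable def diverg {n : ℕ} (V : (Fin n → ℝ) → (Fin n → ℝ)) (x : Fin n → ℝ) : ℝ :=
  ∑ i, pderiv' (fun y => V y i) i x

/-- Gradient of `g : ℝⁿ → ℝ`. -/
noncomputable def grad' {n : ℕ} (g : (Fin n → ℝ) → ℝ) (x : Fin n → ℝ) : Fin n → ℝ :=
  fun i => pderiv' g i x

/-- The Euclidean inner product on ℝⁿ. -/
noncomputable def dotp {n : ℕ} (u w : Fin n → ℝ) : ℝ := ∑ i, u i * w i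

/-- Condition (A): for every `x* ∈ Γ`, `|f x|^(r+1) · div W x → 0` as `x → x*`
with `x ∈ Ω \ Γ`. -/
def CondA {n : ℕ} (Ω Γ : Set (Fin n → ℝ)) (f : (Fin n → ℝ) → ℝ) (r : ℝ)
    (W : (Fin n → ℝ) → (Fin n → ℝ)) : Prop :=
  ∀ xs ∈ Γ, Filter.Tendsto (fun x => |f x| ^ (r + 1) * diverg W x)
    (nhdsWithin xs (Ω \ Γ)) (nhds 0)

/-- Condition (B): for every `x* ∈ Γ` with `V x* = 0`, one has
`|f x|^r · div W x → 0` and `|f x|^(r+1) · ∂(div W)/∂x_i x → 0` as `x → x*`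
with `x ∈ Ω \ Γ`, for each `i`. -/
def CondB {n : ℕ} (Ω Γ : Set (Fin n → ℝ)) (f : (Fin n → ℝ) → ℝ) (r : ℝ)
    (V W : (Fin n → ℝ) → (Fin n → ℝ)) : Prop :=
  ∀ xs ∈ Γ, V xs = 0 →
    Filter.Tendsto (fun x => |f x| ^ r * diverg W x) (nhdsWithin xs (Ω \ Γ)) (nhds 0) ∧
    ∀ i : Fin n, Filter.Tendsto (fun x => |f x| ^ (r + 1) * pderiv' (diverg W) i x)
      (nhdsWithin xs (Ω \ Γ)) (nhds 0)

open Asymptotics in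
/-- A locally Lipschitz function vanishing on the zero set of a submersion `f` is locally bounded
by a multiple of `f`. -/
theorem HasStrictFDerivAt.isBigO_of_eq_zero {E F G : Type*}
    [NormedAddCommGroup E] [NormedSpace ℝ E] [CompleteSpace E]
    [NormedAddCommGroup F] [NormedSpace ℝ F] [CompleteSpace F] [NormedAddCommGroup G]
    {f : E → F} {f' : E →L[ℝ] F} {a : E} (hf : HasStrictFDerivAt f f' a)
    (hsurj : LinearMap.range f'.toLinearMap = ⊤) (hfa : f a = 0)
    {h : E → G} {K : NNReal} {u : Set E} (hu : u ∈ 𝓝 a) (hLip : LipschitzOnWith K h u)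
    (hzero : ∀ᶠ x in 𝓝 a, f x = 0 → h x = 0) :
    h =O[𝓝 a] f := by
  let g := f'.nonlinearRightInverseOfSurjective hsurj
  have hg : 0 < g.nnnorm := f'.nonlinearRightInverseOfSurjective_nnnorm_pos hsurj
  obtain ⟨v, hv, happ⟩ := hf.approximates_deriv_on_nhds (c := g.nnnorm⁻¹ / 2)
    (Or.inr (half_pos (inv_pos.2 hg)))
  obtain ⟨δ, hδ, hball⟩ := Metric.mem_nhds_iff.1 (inter_mem (inter_mem hu hv) hzero)
  refine IsBigO.of_bound (K * (2 * g.nnnorm)) ?_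
  have hsmall : ∀ᶠ x in 𝓝 a, 2 * (g.nnnorm : ℝ) * ‖f x‖ < δ / 2 := by
    have hcont : ContinuousAt (fun x => 2 * (g.nnnorm : ℝ) * ‖f x‖) a :=
      continuousAt_const.mul hf.continuousAt.norm
    exact hcont.eventually_lt continuousAt_const (by simpa [hfa] using hδ)
  filter_upwards [hsmall, Metric.ball_mem_nhds a (half_pos hδ)] with x hx hxa
  have hsub : Metric.closedBall x (2 * g.nnnorm * ‖f x‖) ⊆ Metric.ball a δ := fun y hy => by
    have := dist_triangle y x a
    rw [Metric.mem_closedBall] at hy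
    rw [Metric.mem_ball] at hxa ⊢
    linarith
  obtain ⟨y, hy, hfy⟩ := happ.surjOn_closedBall_of_nonlinearRightInverse g (by positivity)
    (fun y hy => (hball (hsub hy)).1.2) (show (0 : F) ∈ _ by
      have hg' : (g.nnnorm : ℝ) ≠ 0 := by exact_mod_cast hg.ne'
      rw [Metric.mem_closedBall, dist_zero_left]
      push_cast
      field_simp
      norm_num)
  have hhy : h y = 0 := (hball (hsub hy)).2 hfy
  have hxm : x ∈ u := (hball (hsub (Metric.mem_closedBall_self (by positivity)))).1.1
  calc ‖h x‖ = dist (h x) (h y) := by rw [hhy, dist_zero_right]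
    _ ≤ K * dist x y := hLip.dist_le_mul x hxm y (hball (hsub hy)).1.1
    _ ≤ K * (2 * g.nnnorm * ‖f x‖) := by
      gcongr
      rw [dist_comm]
      exact hy
    _ = _ := by ring

/-- A solution of `|u'| ≤ K |u|` that vanishes at `t₀` vanishes near `t₀`. -/
theorem eventually_eq_zero_of_norm_deriv_le {E : Type*} [NormedAddCommGroup E] [NormedSpace ℝ E]
    {u u' : ℝ → E} {K t₀ : ℝ} (hu : ∀ᶠ t in 𝓝 t₀, HasDerivAt u (u' t) t)
    (bound : ∀ᶠ t in 𝓝 t₀, ‖u' t‖ ≤ K * ‖u t‖) (h₀ : u t₀ = 0) :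
    ∀ᶠ t in 𝓝 t₀, u t = 0 := by
  have right : ∀ {v v' : ℝ → E} {s₀ : ℝ}, (∀ᶠ t in 𝓝 s₀, HasDerivAt v (v' t) t) →
      (∀ᶠ t in 𝓝 s₀, ‖v' t‖ ≤ K * ‖v t‖) → v s₀ = 0 →
      ∀ᶠ t in 𝓝 s₀, s₀ ≤ t → v t = 0 := by
    intro v v' s₀ hv hb hv₀
    obtain ⟨δ, hδ, hball⟩ := Metric.eventually_nhds_iff.1 (hv.and hb)
    have key : ∀ t ∈ Set.Icc s₀ (s₀ + δ / 2), HasDerivAt v (v' t) t ∧ ‖v' t‖ ≤ K * ‖v t‖ :=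
      fun t ht => hball (by rw [Real.dist_eq, abs_of_nonneg] <;> linarith [ht.1, ht.2])
    filter_upwards [Iio_mem_nhds (show s₀ < s₀ + δ / 2 by linarith)] with t ht hst
    exact eq_zero_of_abs_deriv_le_mul_abs_self_of_eq_zero_right
      (fun x hx => (key x hx).1.continuousAt.continuousWithinAt)
      (fun x hx => (key x (Set.Ico_subset_Icc_self hx)).1.hasDerivWithinAt) hv₀
      (fun x hx => (key x (Set.Ico_subset_Icc_self hx)).2) t ⟨hst, le_of_lt ht⟩
  have hneg : Tendsto (fun t : ℝ => -t) (𝓝 (-t₀)) (𝓝 t₀) := by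
    simpa using (continuous_neg (G := ℝ)).tendsto (-t₀)
  have hneg' : Tendsto (fun t : ℝ => -t) (𝓝 t₀) (𝓝 (-t₀)) := continuous_neg.tendsto t₀
  have left := right (v := fun t => u (-t)) (v' := fun t => -u' (-t)) (s₀ := -t₀)
    ((hneg.eventually hu).mono fun t ht => by
      simpa [Function.comp_def] using ht.scomp t (hasDerivAt_neg t))
    ((hneg.eventually bound).mono fun t ht => by simpa using ht) (by simpa using h₀)
  filter_upwards [right hu bound h₀, hneg'.eventually left] with t h₁ h₂
  rcases le_total t₀ t with h | h
  · exact h₁ h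
  · simpa using h₂ (neg_le_neg h)

/-- Away from the zero set of `f`, `|f|^(r+1) div (|f|^(-r) V) = |f| div V - r sgn(f) ∇f · V`. -/
theorem abs_rpow_mul_diverg {n : ℕ} {f : (Fin n → ℝ) → ℝ} {V W : (Fin n → ℝ) → (Fin n → ℝ)}
    {r : ℝ} {x : Fin n → ℝ} (hf : DifferentiableAt ℝ f x) (hV : DifferentiableAt ℝ V x)
    (hx : f x ≠ 0) (hW : ∀ᶠ y in 𝓝 x, W y = |f y| ^ (-r) • V y) :
    |f x| ^ (r + 1) * diverg W x =
      |f x| * diverg V x - r * (SignType.sign (f x) : ℝ) * fderiv ℝ f x (V x) := by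
  have hpos : 0 < |f x| := abs_pos.2 hx
  have hpow : HasFDerivAt (fun y => |f y| ^ (-r))
      ((-r * |f x| ^ (-r - 1) * (SignType.sign (f x) : ℝ)) • fderiv ℝ f x) x := by
    have h := ((hasDerivAt_abs hx).rpow_const (p := -r) (Or.inl hpos.ne')).comp_hasFDerivAt x
      hf.hasFDerivAt
    exact h.congr_fderiv (congrArg (· • fderiv ℝ f x) (by ring))
  have hpd : ∀ i, pderiv' (fun y => W y i) i x = |f x| ^ (-r) * pderiv' (fun y => V y i) i x +
      V x i * ((-r * |f x| ^ (-r - 1) * (SignType.sign (f x) : ℝ)) * pderiv' f i x) := by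
    intro i
    have hVi : HasFDerivAt (fun y => V y i) (fderiv ℝ (fun y => V y i) x) x :=
      (differentiableAt_pi.1 hV i).hasFDerivAt
    have hWi : (fun y => W y i) =ᶠ[𝓝 x] fun y => |f y| ^ (-r) * V y i :=
      hW.mono fun y hy => by simp [hy]
    simp only [pderiv']
    rw [hWi.fderiv_eq, (hpow.fun_mul hVi).fderiv]
    simp
  have hsum : fderiv ℝ f x (V x) = ∑ i, V x i * pderiv' f i x := by
    conv_lhs => rw [pi_eq_sum_univ' (V x)]
    simp only [map_sum, map_smul, smul_eq_mul, pderiv']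
  have h₁ : |f x| ^ (r + 1) * |f x| ^ (-r) = |f x| := by
    rw [← Real.rpow_add hpos]; simp
  have h₂ : |f x| ^ (r + 1) * |f x| ^ (-r - 1) = 1 := by
    rw [← Real.rpow_add hpos]; ring_nf; simp
  have hdiv : diverg W x = |f x| ^ (-r) * diverg V x -
      r * |f x| ^ (-r - 1) * (SignType.sign (f x) : ℝ) * fderiv ℝ f x (V x) := by
    rw [hsum, diverg, diverg, Finset.mul_sum, Finset.mul_sum, ← Finset.sum_sub_distrib]
    refine Finset.sum_congr rfl fun i _ => ?_
    rw [hpd]; ring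
  rw [hdiv]
  linear_combination diverg V x * h₁ -
    r * (SignType.sign (f x) : ℝ) * fderiv ℝ f x (V x) * h₂

theorem ContDiffAt.continuousAt_diverg {n : ℕ} {V : (Fin n → ℝ) → (Fin n → ℝ)} {x : Fin n → ℝ}
    (hV : ContDiffAt ℝ 1 V x) : ContinuousAt (diverg V) x := by
  refine tendsto_finsetSum _ fun i _ => ?_
  exact ((contDiffAt_pi.1 hV i).fderiv_right (m := 0) (by simp)).continuousAt.clm_apply
    continuousAt_const

/-- Assume Condition (A). If `γ` is an integral curve of `V` passing at time `t₀`
through a point `x* ∈ Γ` with `V x* ≠ 0`, then near `x*` the curve lies entirely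
in the hypersurface `Γ`: `f (γ t) = 0` for all `t` close to `t₀`. -/
theorem stmt4 {n : ℕ} (hn : 2 ≤ n) (Ω Γ : Set (Fin n → ℝ)) (hΩ : IsOpen Ω)
    (f : (Fin n → ℝ) → ℝ) (s : ℕ) (hs : 2 ≤ s) (hf : ContDiffOn ℝ s f Ω)
    (hΓ : Γ = {x | x ∈ Ω ∧ f x = 0}) (hΓne : Γ.Nonempty)
    (hreg : ∀ x ∈ Γ, grad' f x ≠ 0)
    (V : (Fin n → ℝ) → (Fin n → ℝ)) (hV : ContDiffOn ℝ s V Ω)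
    (r : ℝ) (hr : 0 < r)
    (W : (Fin n → ℝ) → (Fin n → ℝ))
    (hW : ∀ x ∈ Ω \ Γ, W x = |f x| ^ (-r) • V x)
    (hA : CondA Ω Γ f r W)
    (a b t₀ : ℝ) (γ : ℝ → (Fin n → ℝ)) (ht₀ : t₀ ∈ Set.Ioo a b)
    (hγΩ : ∀ t ∈ Set.Ioo a b, γ t ∈ Ω)
    (hγ : ∀ t ∈ Set.Ioo a b, HasDerivAt γ (V (γ t)) t)
    (xs : Fin n → ℝ) (hxs : xs ∈ Γ) (hγt₀ : γ t₀ = xs) (hVxs : V xs ≠ 0) :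
    ∃ ε > 0, ∀ t : ℝ, |t - t₀| < ε → f (γ t) = 0 := by
  have memΓ : ∀ {x}, x ∈ Ω → (x ∈ Γ ↔ f x = 0) := fun hx => by simp [hΓ, hx]
  have hΓΩ : ∀ {x}, x ∈ Γ → x ∈ Ω := fun hx => by rw [hΓ] at hx; exact hx.1
  have hs' : (2 : WithTop ℕ∞) ≤ s := by exact_mod_cast hs
  have hfC : ∀ x ∈ Ω, ContDiffAt ℝ 2 f x := fun x hx =>
    (hf.contDiffAt (hΩ.mem_nhds hx)).of_le hs'
  have hVC : ∀ x ∈ Ω, ContDiffAt ℝ 2 V x := fun x hx =>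
    (hV.contDiffAt (hΩ.mem_nhds hx)).of_le hs'
  set h : (Fin n → ℝ) → ℝ := fun x => fderiv ℝ f x (V x) with h_def
  have hhC : ∀ x ∈ Ω, ContDiffAt ℝ 1 h x := fun x hx =>
    ((hfC x hx).fderiv_right (m := 1) (by norm_num)).clm_apply
      ((hVC x hx).of_le (by norm_num))
  have hfd : ∀ x ∈ Γ, fderiv ℝ f x ≠ 0 := fun x hx h0 => hreg x hx (by
    ext i; simp [grad', pderiv', h0])
  have hopen : ∀ {x}, x ∈ Ω → f x ≠ 0 → ∀ᶠ y in 𝓝 x, y ∈ Ω \ Γ := fun {x} hx hfx => by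
    filter_upwards [hΩ.mem_nhds hx, (hfC x hx).continuousAt.eventually_ne hfx] with y hy hfy
    exact ⟨hy, fun hyΓ => hfy ((memΓ hy).1 hyΓ)⟩
  have hzero : ∀ y ∈ Γ, h y = 0 := by
    intro y hy
    have hyΩ := hΓΩ hy
    have hfy : f y = 0 := (memΓ hyΩ).1 hy
    have hne : (𝓝[Ω \ Γ] y).NeBot := by
      by_contra hbot
      rw [not_neBot, ← empty_mem_iff_bot, mem_nhdsWithin_iff_eventually] at hbot
      have hev : f =ᶠ[𝓝 y] fun _ => 0 := by
        filter_upwards [hbot, hΩ.mem_nhds hyΩ] with x hx hxΩ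
        by_contra hfx
        exact hx ⟨hxΩ, fun hxΓ => hfx ((memΓ hxΩ).1 hxΓ)⟩
      exact hfd y hy (by rw [hev.fderiv_eq]; simp)
    have hlim : Tendsto (fun x => |f x| * diverg V x - |f x| ^ (r + 1) * diverg W x)
        (𝓝[Ω \ Γ] y) (𝓝 0) := by
      have h₁ : Tendsto (fun x => |f x| * diverg V x) (𝓝[Ω \ Γ] y) (𝓝 0) := by
        have hc : ContinuousAt (fun x => |f x| * diverg V x) y :=
          (hfC y hyΩ).continuousAt.abs.mul
            ((hVC y hyΩ).of_le (by norm_num)).continuousAt_diverg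
        simpa [ContinuousAt, hfy] using hc.tendsto.mono_left nhdsWithin_le_nhds
      simpa using h₁.sub (hA y hy)
    have habs : Tendsto (fun x => r * |h x|) (𝓝[Ω \ Γ] y) (𝓝 0) := by
      refine (abs_zero (α := ℝ) ▸ hlim.abs).congr' ?_
      filter_upwards [self_mem_nhdsWithin] with x hx
      have hfx : f x ≠ 0 := fun h0 => hx.2 ((memΓ hx.1).2 h0)
      rw [abs_rpow_mul_diverg ((hfC x hx.1).differentiableAt (by norm_num))
        ((hVC x hx.1).differentiableAt (by norm_num)) hfx
        ((hopen hx.1 hfx).mono hW), sub_sub_cancel, abs_mul, abs_mul, abs_of_pos hr]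
      rcases lt_or_gt_of_ne hfx with hlt | hgt
      · simp [sign_neg hlt, h_def]
      · simp [sign_pos hgt, h_def]
    have hcont : Tendsto (fun x => r * |h x|) (𝓝[Ω \ Γ] y) (𝓝 (r * |h y|)) :=
      (continuousAt_const.mul (hhC y hyΩ).continuousAt.abs).tendsto.mono_left nhdsWithin_le_nhds
    simpa [hr.ne'] using tendsto_nhds_unique hcont habs
  have hxsΩ := hΓΩ hxs
  obtain ⟨K, u, hu, hLip⟩ := (hhC xs hxsΩ).exists_lipschitzOnWith
  have hbig := ((hfC xs hxsΩ).hasStrictFDerivAt (by norm_num)).isBigO_of_eq_zero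
    (LinearMap.range_eq_top.2 (LinearMap.surjective
      fun h0 => hfd xs hxs (by ext1 v; exact LinearMap.congr_fun h0 v)))
    ((memΓ hxsΩ).1 hxs) hu hLip
    (by filter_upwards [hΩ.mem_nhds hxsΩ] with x hx hfx using hzero x ((memΓ hx).2 hfx))
  obtain ⟨C, hC⟩ := hbig.bound
  have hIoo : ∀ᶠ t in 𝓝 t₀, t ∈ Set.Ioo a b := isOpen_Ioo.mem_nhds ht₀
  have hγcont : Tendsto γ (𝓝 t₀) (𝓝 xs) := hγt₀ ▸ (hγ t₀ ht₀).continuousAt.tendsto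
  have hfinal := eventually_eq_zero_of_norm_deriv_le (u := fun t => f (γ t))
    (u' := fun t => h (γ t)) (K := C) (t₀ := t₀)
    (hIoo.mono fun t ht => ((hfC _ (hγΩ t ht)).differentiableAt
      (by norm_num)).hasFDerivAt.comp_hasDerivAt t (hγ t ht))
    (hγcont.eventually hC) (by simpa [hγt₀] using (memΓ hxsΩ).1 hxs)
  obtain ⟨ε, hε, hball⟩ := Metric.eventually_nhds_iff.1 hfinal
  exact ⟨ε, hε, fun t ht => hball (by rwa [Real.dist_eq])⟩
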